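/- arXiv:1504.04299 — 2 statements merged into one kernel-verified Lean document; each statement's English description precedes it below -/
import Mathlib

section
/- A simple graph is a circle graph if and only if it is isomorphic to a vertex-minor of some bipartite circle graph. -/
/-!
## Why the theorem is true

Interlacement is handled through a parity: `pairCount x y w` is the number, modulo 2, of ways to
pick an occurrence of `x` standing before an occurrence of `y`. In a double occurrence word two
letters are interlaced exactly when this parity is 1 (`alternates_iff`), and the parity is
additive enough under concatenation, reversal and deletion of letters to make all computations
routine.

*Vertex-minors of circle graphs are circle graphs.* Local complementation at `v` corresponds to
reversing the segment of the word between the two occurrences of `v` (`Represents.localComp`), and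
passing to an induced subgraph corresponds to deleting letters (`IsCircleGraph.of_embedding`).

*Every circle graph is a vertex-minor of a bipartite one.* Fix a 2-colouring of the vertices,
not necessarily proper, and argue by induction on the number of monochromatic edges. If there is
one, then among all monochromatic edges `ab` and all ways to write the cyclic word as `b Q a R`
with `a, b` not in `Q`, a shortest `Q` contains every letter coloured like `a` an even number of
times: otherwise such a letter `c` would be interlaced with `a` or `b`, giving a shorter segment
(`exists_tight`). Replace `b Q a R` by
`x t Q t z y x a y b z R`,
where `x, t` are new letters coloured like `a`, and `y, z` new letters of the other colour.
* Local complementation at `t, x, z, y, z` in turn produces `x y b z t Q t x a y z R`, from which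
  deleting the new letters gives back `b Q a R` (`uncrossWord_vertexMinor`).
* In the new word `a` and `b` no longer interlace, and no monochromatic edge is created
  (`uncrossWord_mono`).

So the number of monochromatic edges drops; once it is zero, the graph is bipartite.
-/

open scoped Classical

/-! ## Double occurrence words and circle graphs -/

/-- Two elements are interlaced in the (cyclically read) word `w`:
their occurrences alternate `u…v…u…v`. -/
def Interlaced {V : Type} (w : List V) (u v : V) : Prop :=
  ∃ i j k l : Fin w.length, i < j ∧ j < k ∧ k < l ∧
    ((w.get i = u ∧ w.get j = v ∧ w.get k = u ∧ w.get l = v) ∨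
     (w.get i = v ∧ w.get j = u ∧ w.get k = v ∧ w.get l = u))

/-- `G` is a circle graph: there is a double occurrence word on its vertex set whose
interlacement relation is the adjacency relation of `G`. -/
def IsCircleGraph {V : Type} [DecidableEq V] (G : SimpleGraph V) : Prop :=
  ∃ w : List V, (∀ v : V, w.count v = 2) ∧
    ∀ u v : V, u ≠ v → (G.Adj u v ↔ Interlaced w u v)

/-! ## Local complementation, local equivalence, vertex-minors -/

/-- Simple local complementation at `v`: toggle adjacencies between neighbors of `v`. -/
def localComp {V : Type} (G : SimpleGraph V) (v : V) : SimpleGraph V :=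
  SimpleGraph.fromRel (fun x y =>
    (G.Adj x v ∧ G.Adj y v ∧ ¬ G.Adj x y) ∨ (¬ (G.Adj x v ∧ G.Adj y v) ∧ G.Adj x y))

/-- Local equivalence: a finite sequence of local complementations. -/
def LocallyEquiv {V : Type} (G H : SimpleGraph V) : Prop :=
  Relation.ReflTransGen (fun A B => ∃ v, B = localComp A v) G H

/-- `H` is isomorphic to a vertex-minor of `G`, i.e. to an induced subgraph of a graph
locally equivalent to `G`. -/
def IsVertexMinor {U V : Type} (H : SimpleGraph U) (G : SimpleGraph V) : Prop :=
  ∃ G' : SimpleGraph V, LocallyEquiv G G' ∧ ∃ s : Set V, Nonempty (H ≃g G'.induce s)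

/-- The degree of a vertex. -/
noncomputable def degv {V : Type} (G : SimpleGraph V) (v : V) : ℕ :=
  (G.neighborSet v).ncard

/-! ### Pair counts modulo 2 -/

set_option linter.unusedSimpArgs false

section
variable {V W : Type} [DecidableEq V] [DecidableEq W]

/-- The number, modulo 2, of pairs of positions `i < j` in the list with letter `x` at `i` and
letter `y` at `j`. -/
def pairCount (x y : V) : List V → ZMod 2
  | [] => 0
  | z :: w => (if z = x then (w.count y : ZMod 2) else 0) + pairCount x y w

@[simp] lemma pairCount_nil (x y : V) : pairCount x y [] = 0 := rfl

@[simp] lemma pairCount_cons (x y z : V) (w : List V) :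
    pairCount x y (z :: w) = (if z = x then (w.count y : ZMod 2) else 0) + pairCount x y w := rfl

lemma pairCount_append (x y : V) (A B : List V) :
    pairCount x y (A ++ B) = pairCount x y A + pairCount x y B + (A.count x : ZMod 2) * B.count y := by
  induction A with
  | nil => simp
  | cons z A ih =>
    by_cases h : z = x
    · simp [ih, h]; ring
    · simp [ih, h, List.count_cons]

lemma pairCount_reverse (x y : V) (hxy : x ≠ y) (A : List V) :
    pairCount x y A.reverse = (A.count x : ZMod 2) * A.count y + pairCount x y A := by
  induction A with
  | nil => simp
  | cons z A ih =>
    rw [List.reverse_cons, pairCount_append, ih]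
    by_cases h : z = x
    · subst h
      simp [List.count_cons, hxy]
      linear_combination -(A.count y : ZMod 2) * (CharTwo.two_eq_zero (R := ZMod 2))
    · by_cases h' : z = y
      · subst h'
        simp [List.count_cons, h]; ring
      · simp [List.count_cons, h, h']

lemma pairCount_eq_zero_left (x y : V) (A : List V) (h : x ∉ A) : pairCount x y A = 0 := by
  induction A with
  | nil => rfl
  | cons z A ih => simp only [List.mem_cons, not_or] at h; simp [ih h.2, Ne.symm h.1]

lemma pairCount_eq_zero_right (x y : V) (A : List V) (h : y ∉ A) : pairCount x y A = 0 := by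
  induction A with
  | nil => rfl
  | cons z A ih =>
    simp only [List.mem_cons, not_or] at h
    simp [ih h.2, List.count_eq_zero_of_not_mem h.2]

/-- Deleting the letters outside the range of `f` and pulling the others back along `f`
(`g` is the partial inverse of `f`) does not change multiplicities. -/
lemma count_filterMap' (f : V → W) (g : W → Option V)
    (hg : ∀ z u, g z = some u ↔ z = f u) (u : V) (w : List W) :
    (w.filterMap g).count u = w.count (f u) := by
  induction w with
  | nil => simp
  | cons z w ih =>
    rcases h : g z with _ | u'
    · have : z ≠ f u := fun e => by simp [(hg z u).2 e] at h
      simp [List.filterMap_cons, h, ih, List.count_cons, this]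
    · have h1 := (hg z u').1 h
      have h2 : u' = u ↔ z = f u := by rw [← hg, h]; simp
      simp [List.filterMap_cons, h, ih, List.count_cons, h2]

lemma pairCount_filterMap (f : V → W) (g : W → Option V)
    (hg : ∀ z u, g z = some u ↔ z = f u) (u v : V) (w : List W) :
    pairCount u v (w.filterMap g) = pairCount (f u) (f v) w := by
  induction w with
  | nil => simp
  | cons z w ih =>
    rcases h : g z with _ | u'
    · have : z ≠ f u := fun e => by simp [(hg z u).2 e] at h
      simp [List.filterMap_cons, h, ih, this]
    · have h2 : u' = u ↔ z = f u := by rw [← hg, h]; simp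
      simp [List.filterMap_cons, h, ih, h2, count_filterMap' f g hg]

/-! ### Words representing a graph -/

/-- `w` is a double occurrence word whose interlacement graph is `G`, with interlacement expressed
through the parity `pairCount`. -/
structure Represents (w : List V) (G : SimpleGraph V) : Prop where
  count : ∀ v, w.count v = 2
  adj : ∀ u v, u ≠ v → (G.Adj u v ↔ pairCount u v w = 1)

lemma pairCount_filter (u v : V) (w : List V) :
    pairCount u v (w.filter (fun z => z = u ∨ z = v)) = pairCount u v w := by
  induction w with
  | nil => simp
  | cons z w ih =>
    have hc : (w.filter (fun z => z = u ∨ z = v)).count v = w.count v :=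
      List.count_filter (by simp)
    simp only [Bool.decide_or] at ih hc
    by_cases h : z = u
    · simp [h, ih, hc]
    · by_cases h' : z = v
      · subst h'
        simp [h, ih]
      · simp [h, h', ih]

/-- Only the restriction of `w` to the letters `u, v` matters; it has length 4, and the six possible
words are checked one by one. -/
lemma alternates_iff (u v : V) (huv : u ≠ v) (w : List V) (hu : w.count u = 2)
    (hv : w.count v = 2) :
    ([u, v, u, v].Sublist w ∨ [v, u, v, u].Sublist w) ↔ pairCount u v w = 1 := by
  set l := w.filter (fun z => z = u ∨ z = v) with hl
  have hlu : l.count u = 2 := by rw [hl, List.count_filter (by simp), hu]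
  have hlv : l.count v = 2 := by rw [hl, List.count_filter (by simp), hv]
  have hmem : ∀ z ∈ l, z = u ∨ z = v := by
    intro z hz; simpa using (List.mem_filter.1 hz).2
  have hlen : l.length = 4 := by
    have : ∀ m : List V, (∀ z ∈ m, z = u ∨ z = v) → m.length = m.count u + m.count v := by
      intro m
      induction m with
      | nil => simp
      | cons z m ih =>
        intro h
        have := ih fun x hx => h x (by simp [hx])
        rcases h z (by simp) with rfl | rfl
        · simp [this, List.count_cons, huv]; omega
        · simp [this, List.count_cons, huv.symm]; omega
    rw [this l hmem, hlu, hlv]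
  have key : ∀ m : List V, (∀ z ∈ m, z = u ∨ z = v) → m.length = 4 →
      (m.Sublist w ↔ m = l) := by
    intro m hm hm4
    constructor
    · intro h
      have h2 := h.filter (fun z => decide (z = u ∨ z = v))
      rw [List.filter_eq_self.2 (by simpa using hm)] at h2
      exact h2.eq_of_length (by rw [hm4, ← hlen])
    · rintro rfl; exact List.filter_sublist
  rw [key _ (by simp) rfl, key _ (by simp) rfl, ← pairCount_filter, ← hl]
  clear_value l
  match l, hlen with
  | [p, q, r, s], _ =>
    have hp := hmem p (by simp)
    have hq := hmem q (by simp)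
    have hr := hmem r (by simp)
    have hs := hmem s (by simp)
    have h2 : (2 : ZMod 2) = 0 := rfl
    have h11 : (1 + 1 : ZMod 2) = 0 := rfl
    rcases hp with rfl | rfl <;> rcases hq with rfl | rfl <;> rcases hr with rfl | rfl <;>
      rcases hs with rfl | rfl <;>
      simp [List.count_cons, huv, huv.symm, h2, h11] at hlu hlv ⊢

lemma interlaced_iff_sublist {U : Type} (w : List U) (u v : U) :
    Interlaced w u v ↔ ([u, v, u, v].Sublist w ∨ [v, u, v, u].Sublist w) := by
  have key : ∀ a b : U, [a, b, a, b].Sublist w ↔ ∃ i j k l : Fin w.length,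
      i < j ∧ j < k ∧ k < l ∧ w.get i = a ∧ w.get j = b ∧ w.get k = a ∧ w.get l = b := by
    intro a b
    rw [List.sublist_iff_exists_fin_orderEmbedding_get_eq]
    constructor
    · rintro ⟨f, hf⟩
      refine ⟨f ⟨0, by simp⟩, f ⟨1, by simp⟩, f ⟨2, by simp⟩, f ⟨3, by simp⟩, ?_, ?_, ?_,
        (hf _).symm, (hf _).symm, (hf _).symm, (hf _).symm⟩ <;> simp
    · rintro ⟨i, j, k, l, hij, hjk, hkl, h1, h2, h3, h4⟩
      have hm : StrictMono (![i, j, k, l] : Fin 4 → Fin w.length) := by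
        rw [Fin.strictMono_iff_lt_succ]
        intro t; fin_cases t <;> assumption
      refine ⟨OrderEmbedding.ofStrictMono (![i, j, k, l] : Fin 4 → Fin w.length) hm, ?_⟩
      intro t
      change Fin 4 at t
      fin_cases t
      · exact h1.symm
      · exact h2.symm
      · exact h3.symm
      · exact h4.symm
  rw [key, key]
  unfold Interlaced
  constructor
  · rintro ⟨i, j, k, l, h1, h2, h3, h | h⟩
    · exact Or.inl ⟨i, j, k, l, h1, h2, h3, h⟩
    · exact Or.inr ⟨i, j, k, l, h1, h2, h3, h⟩
  · rintro (⟨i, j, k, l, h1, h2, h3, h⟩ | ⟨i, j, k, l, h1, h2, h3, h⟩)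
    · exact ⟨i, j, k, l, h1, h2, h3, Or.inl h⟩
    · exact ⟨i, j, k, l, h1, h2, h3, Or.inr h⟩

lemma isCircleGraph_iff (G : SimpleGraph V) : IsCircleGraph G ↔ ∃ w, Represents w G := by
  constructor
  · rintro ⟨w, hc, ha⟩
    exact ⟨w, hc, fun u v h => by
      rw [ha u v h, interlaced_iff_sublist, alternates_iff u v h w (hc u) (hc v)]⟩
  · rintro ⟨w, hc, ha⟩
    exact ⟨w, hc, fun u v h => by
      rw [ha u v h, interlaced_iff_sublist, alternates_iff u v h w (hc u) (hc v)]⟩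

lemma pairCount_comm (w : List V) (hc : ∀ v, w.count v = 2) (u v : V) (h : u ≠ v) :
    pairCount u v w = pairCount v u w := by
  have : ∀ m : List V, pairCount u v m + pairCount v u m = (m.count u : ZMod 2) * m.count v := by
    intro m
    induction m with
    | nil => simp
    | cons z m ih =>
      by_cases h1 : z = u
      · subst h1; simp [List.count_cons, h]; linear_combination ih
      · by_cases h2 : z = v
        · subst h2; simp [List.count_cons, h1]; linear_combination ih
        · simp [List.count_cons, h1, h2, ih]
  have h2 := this w
  rw [hc u, hc v] at h2
  have h4 : ((2 : ℕ) : ZMod 2) * ((2 : ℕ) : ZMod 2) = 0 := rfl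
  rw [h4] at h2
  exact CharTwo.add_eq_zero.1 h2

lemma exists_rep (w : List V) (hc : ∀ v, w.count v = 2) : ∃ G : SimpleGraph V, Represents w G :=
  ⟨{ Adj := fun u v => u ≠ v ∧ pairCount u v w = 1
     symm := ⟨fun u v h => ⟨h.1.symm, by rw [pairCount_comm w hc v u h.1.symm]; exact h.2⟩⟩
     loopless := ⟨fun u h => h.1 rfl⟩ }, hc, fun u v h => by simp [h]⟩

/-- Words may be read cyclically. -/
lemma Represents.rotate {A B : List V} {G : SimpleGraph V} (h : Represents (A ++ B) G) :
    Represents (B ++ A) G := by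
  refine ⟨fun v => ?_, fun u v huv => ?_⟩
  · rw [← h.count v]; simp [add_comm]
  · rw [h.adj u v huv, pairCount_append, pairCount_append]
    have h1 : (A.count u : ZMod 2) + B.count u = 0 := by
      have := h.count u; rw [List.count_append] at this; rw [← Nat.cast_add, this]; rfl
    have h2 : (A.count v : ZMod 2) + B.count v = 0 := by
      have := h.count v; rw [List.count_append] at this; rw [← Nat.cast_add, this]; rfl
    rw [CharTwo.add_eq_zero.1 h1, CharTwo.add_eq_zero.1 h2, add_comm (pairCount u v A)]

/-! ### Local complementation and closure under vertex-minors -/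

lemma localComp_adj {U : Type} (G : SimpleGraph U) (v x y : U) :
    (localComp G v).Adj x y ↔ x ≠ y ∧
      ((G.Adj x v ∧ G.Adj y v ∧ ¬ G.Adj x y) ∨ (¬ (G.Adj x v ∧ G.Adj y v) ∧ G.Adj x y)) := by
  simp only [localComp, SimpleGraph.fromRel_adj, G.adj_comm y x]
  tauto

/-- Local complementation at `v` is reversal of the segment between the two occurrences of `v`:
the neighbours of `v` are the letters occurring an odd number of times in `B`, and reversing `B`
changes the pair count of `x, y` by the product of their multiplicities in `B`. -/
lemma Represents.localComp {A B C : List V} {v : V} {G : SimpleGraph V}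
    (h : Represents (A ++ v :: B ++ v :: C) G) :
    Represents (A ++ v :: B.reverse ++ v :: C) (localComp G v) := by
  have hv : v ∉ A ∧ v ∉ B ∧ v ∉ C := by
    have := h.count v
    simp only [List.count_append, List.count_cons_self] at this
    refine ⟨?_, ?_, ?_⟩ <;> rw [← List.count_eq_zero] <;> omega
  have hxv : ∀ x, x ≠ v → (G.Adj x v ↔ (B.count x : ZMod 2) = 1) := by
    intro x hx
    rw [h.adj x v hx]
    simp only [pairCount_append, pairCount_cons, List.count_append, List.count_cons_of_ne hx.symm,
      List.count_cons_self, if_neg hx.symm, List.count_eq_zero_of_not_mem hv.1,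
      List.count_eq_zero_of_not_mem hv.2.1, List.count_eq_zero_of_not_mem hv.2.2,
      pairCount_eq_zero_right x v _ hv.1, pairCount_eq_zero_right x v _ hv.2.1, pairCount_eq_zero_right x v _ hv.2.2]
    have h2 : (2 : ZMod 2) = 0 := rfl
    have e : (A.count x : ZMod 2) + (A.count x + B.count x) = B.count x := by
      linear_combination (A.count x : ZMod 2) * h2
    push_cast
    simp only [zero_add, add_zero, mul_one, e]
  have hvv : ∀ x, (A ++ v :: B.reverse ++ v :: C).count x = 2 := by
    intro x; rw [← h.count x]; simp [List.count_append, List.count_cons]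
  have hne : ∀ x y, x ≠ y → x ≠ v → y ≠ v → pairCount x y (A ++ v :: B.reverse ++ v :: C) =
      pairCount x y (A ++ v :: B ++ v :: C) + B.count x * B.count y := by
    intro x y hxy hx hy
    simp only [pairCount_append, pairCount_cons, List.count_append, List.count_cons_of_ne hx.symm,
      List.count_cons_of_ne hy.symm, if_neg hx.symm, pairCount_reverse x y hxy, List.count_reverse]
    ring
  have hxv' : ∀ x, x ≠ v → pairCount x v (A ++ v :: B.reverse ++ v :: C) =
      pairCount x v (A ++ v :: B ++ v :: C) := by
    intro x hx
    have hvr : v ∉ B.reverse := by simpa using hv.2.1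
    simp only [pairCount_append, pairCount_cons, List.count_append, List.count_cons_of_ne hx.symm,
      List.count_cons_self, if_neg hx.symm, List.count_reverse,
      pairCount_eq_zero_right x v _ hv.2.1, pairCount_eq_zero_right x v _ hvr]
  refine ⟨hvv, fun x y hxy => ?_⟩
  rw [localComp_adj]
  by_cases hx : x = v
  · subst hx
    rw [pairCount_comm _ hvv x y hxy, hxv' y hxy.symm, ← h.adj y x hxy.symm, G.adj_comm y x]
    simp [hxy]
  by_cases hy : y = v
  · subst hy
    rw [hxv' x hxy, ← h.adj x y hxy]
    simp [hxy]
  rw [hne x y hxy hx hy, hxv x hx, hxv y hy, h.adj x y hxy]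
  generalize pairCount x y (A ++ v :: B ++ v :: C) = i
  generalize (B.count x : ZMod 2) = p
  generalize (B.count y : ZMod 2) = q
  simp only [ne_eq, hxy, not_false_eq_true, true_and]
  clear hx hy hxy
  revert i p q
  decide

lemma exists_split {w : List V} {v : V} (h : w.count v = 2) :
    ∃ A B C, w = A ++ v :: B ++ v :: C := by
  obtain ⟨A, D, rfl⟩ := List.append_of_mem (List.count_pos_iff.1 (by omega : 0 < w.count v))
  by_cases hA : v ∈ A
  · obtain ⟨A, B, rfl⟩ := List.append_of_mem hA
    exact ⟨A, B, D, by simp⟩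
  · have : v ∈ D := by
      rw [← List.count_pos_iff]
      rw [List.count_append, List.count_eq_zero_of_not_mem hA, List.count_cons_self] at h
      omega
    obtain ⟨B, C, rfl⟩ := List.append_of_mem this
    exact ⟨A, B, C, by simp⟩

lemma IsCircleGraph.of_locallyEquiv {G H : SimpleGraph V} (h : LocallyEquiv G H)
    (hG : IsCircleGraph G) : IsCircleGraph H := by
  induction h with
  | refl => exact hG
  | tail _ h ih =>
    obtain ⟨v, rfl⟩ := h
    obtain ⟨w, hw⟩ := (isCircleGraph_iff _).1 ih
    obtain ⟨A, B, C, rfl⟩ := exists_split (hw.count v)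
    exact (isCircleGraph_iff _).2 ⟨_, hw.localComp⟩

lemma IsCircleGraph.of_embedding {G : SimpleGraph V} {H : SimpleGraph W} (f : G ↪g H)
    (hH : IsCircleGraph H) : IsCircleGraph G := by
  obtain ⟨w, hw⟩ := (isCircleGraph_iff _).1 hH
  have hg : ∀ z u, Function.partialInv f z = some u ↔ z = f u := fun z u => by
    rw [Function.Injective.isPartialInv f.injective u z, eq_comm]
  refine (isCircleGraph_iff _).2 ⟨w.filterMap (Function.partialInv f),
    fun v => ?_, fun u v huv => ?_⟩
  · rw [count_filterMap' f _ hg, hw.count]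
  · rw [pairCount_filterMap f _ hg, ← hw.adj _ _ (f.injective.ne huv), f.map_adj_iff]

end

/-! ### Vertex-minors through embeddings -/

lemma localComp_embedding {V W : Type} {G : SimpleGraph V} {H : SimpleGraph W} (f : G ↪g H) (v : V) :
    Nonempty (localComp G v ↪g localComp H (f v)) :=
  ⟨{ toFun := f, inj' := f.injective, map_rel_iff' := by
      intro a b
      change (localComp H (f v)).Adj (f a) (f b) ↔ _
      simp only [localComp_adj, f.map_adj_iff, f.injective.ne_iff] }⟩

lemma isVertexMinor_iff {V W : Type} {G : SimpleGraph V} {H : SimpleGraph W} :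
    IsVertexMinor G H ↔ ∃ H', LocallyEquiv H H' ∧ Nonempty (G ↪g H') := by
  constructor
  · rintro ⟨H', h, s, ⟨e⟩⟩
    exact ⟨H', h, ⟨e.toEmbedding.trans (SimpleGraph.Embedding.induce s)⟩⟩
  · rintro ⟨H', h, ⟨f⟩⟩
    exact ⟨H', h, Set.range f, ⟨f.isoInduceRange⟩⟩

/-- Local complementations of the middle graph lift along an embedding into the large one. -/
lemma IsVertexMinor.trans {U V W : Type} {G : SimpleGraph U} {H : SimpleGraph V}
    {K : SimpleGraph W} (hGH : IsVertexMinor G H) (hHK : IsVertexMinor H K) :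
    IsVertexMinor G K := by
  obtain ⟨H', hH, ⟨f⟩⟩ := isVertexMinor_iff.1 hGH
  obtain ⟨K', hK, he⟩ := isVertexMinor_iff.1 hHK
  have : ∃ K'', LocallyEquiv K K'' ∧ Nonempty (H' ↪g K'') := by
    clear f
    induction hH with
    | refl => exact ⟨K', hK, he⟩
    | tail _ h ih =>
      obtain ⟨v, rfl⟩ := h
      obtain ⟨K'', hK, ⟨g⟩⟩ := ih
      exact ⟨_, Relation.ReflTransGen.tail hK ⟨g v, rfl⟩, localComp_embedding g v⟩
  obtain ⟨K'', hK, ⟨g⟩⟩ := this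
  exact isVertexMinor_iff.2 ⟨K'', hK, ⟨f.trans g⟩⟩

section
variable {V W : Type} [DecidableEq V] [DecidableEq W]

/-! ### A shortest segment spanned by a monochromatic edge -/

/-- If `b` precedes `a` in `R` and each of `a, b, c` occurs once, then `b` precedes `c` or `c`
precedes `a`. -/
lemma pairCount_trans (a b c : V) (hab : a ≠ b) (hca : c ≠ a) (hcb : c ≠ b) (R : List V)
    (ha : R.count a = 1) (hb : R.count b = 1) (hc : R.count c = 1)
    (h : pairCount b a R = 1) : pairCount b c R = 1 ∨ pairCount c a R = 1 := by
  induction R with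
  | nil => simp at h
  | cons z R ih =>
    by_cases hzb : z = b
    · subst hzb
      left
      rw [List.count_cons_self] at hb
      rw [List.count_cons_of_ne hcb.symm] at hc
      simp [hc, pairCount_eq_zero_left z c R (List.count_eq_zero.1 (by omega))]
    by_cases hza : z = a
    · subst hza
      rw [List.count_cons_self] at ha
      simp [hab, pairCount_eq_zero_right b z R (List.count_eq_zero.1 (by omega))] at h
    by_cases hzc : z = c
    · subst hzc
      right
      rw [List.count_cons_self] at hc
      rw [List.count_cons_of_ne hca] at ha
      simp [ha, pairCount_eq_zero_left z a R (List.count_eq_zero.1 (by omega))]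
    rw [List.count_cons_of_ne hza] at ha
    rw [List.count_cons_of_ne hzb] at hb
    rw [List.count_cons_of_ne hzc] at hc
    simp only [pairCount_cons, if_neg hzb, if_neg hzc, zero_add] at h ⊢
    exact ih ha hb hc h

/-- Starting from a monochromatic edge `ab` and a word `b Q a R`, there is a monochromatic edge with
such a word in which every letter of the colour of the edge occurs an even number of times in `Q`.
If a letter `c` of that colour occurs once in `Q`, then `c` is adjacent to `b` or to `a`, and `Q` can
be shortened to the part between `b` and `c` or between `c` and `a`. -/
lemma exists_tight (G : SimpleGraph V) (col : V → Bool) (n : ℕ) :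
    ∀ (a b : V) (Q R : List V), Q.length = n → col a = col b → G.Adj a b →
      Represents (b :: Q ++ a :: R) G → a ∉ Q → b ∉ Q →
      ∃ (a b : V) (Q R : List V), col a = col b ∧ G.Adj a b ∧ Represents (b :: Q ++ a :: R) G ∧
        ∀ c, col c = col a → (Q.count c : ZMod 2) = 0 := by
  induction n using Nat.strong_induction_on with
  | _ n ih =>
  intro a b Q R hn hcol hadj hw haQ hbQ
  by_cases hall : ∀ c, col c = col a → (Q.count c : ZMod 2) = 0
  · exact ⟨a, b, Q, R, hcol, hadj, hw, hall⟩
  push Not at hall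
  obtain ⟨c, hcc, hcQ⟩ := hall
  have hab : a ≠ b := hadj.ne
  have hca : c ≠ a := by rintro rfl; simp [List.count_eq_zero_of_not_mem haQ] at hcQ
  have hcb : c ≠ b := by rintro rfl; simp [List.count_eq_zero_of_not_mem hbQ] at hcQ
  have hc1 : Q.count c = 1 := by
    have h := hw.count c
    simp only [List.count_append, List.count_cons_of_ne hca.symm,
      List.count_cons_of_ne hcb.symm] at h
    have h0 : Q.count c ≠ 0 := fun h => hcQ (by rw [h]; rfl)
    have h2 : Q.count c ≠ 2 := fun h => hcQ (by rw [h]; rfl)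
    omega
  obtain ⟨Q₁, Q₂, rfl⟩ := List.append_of_mem (List.count_pos_iff.1 (by omega : 0 < Q.count c))
  have hc12 : c ∉ Q₁ ∧ c ∉ Q₂ := by
    rw [List.count_append, List.count_cons_self] at hc1
    constructor <;> rw [← List.count_eq_zero] <;> omega
  simp only [List.mem_append, List.mem_cons, not_or] at haQ hbQ
  have hRa : R.count a = 1 := by
    have h := hw.count a
    simp only [List.count_append, List.count_cons_of_ne hca, List.count_cons_of_ne hab.symm,
      List.count_cons_self, List.count_eq_zero_of_not_mem haQ.1,
      List.count_eq_zero_of_not_mem haQ.2.2] at h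
    omega
  have hRb : R.count b = 1 := by
    have h := hw.count b
    simp only [List.count_append, List.count_cons_of_ne hcb, List.count_cons_of_ne hab,
      List.count_cons_self, List.count_eq_zero_of_not_mem hbQ.1,
      List.count_eq_zero_of_not_mem hbQ.2.2] at h
    omega
  have hRc : R.count c = 1 := by
    have h := hw.count c
    simp only [List.count_append, List.count_cons_of_ne hca.symm, List.count_cons_of_ne hcb.symm,
      List.count_cons_self, List.count_eq_zero_of_not_mem hc12.1,
      List.count_eq_zero_of_not_mem hc12.2] at h
    omega
  have h2 : (2 : ZMod 2) = 0 := rfl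
  have h11 : (1 + 1 : ZMod 2) = 0 := rfl
  have hba := (hw.adj b a hab.symm).1 hadj.symm
  simp [pairCount_append, hab, hab.symm, hca, hca.symm, hcb, hcb.symm, hRa, hRb, hRc,
    List.count_eq_zero_of_not_mem haQ.1, List.count_eq_zero_of_not_mem haQ.2.2,
    List.count_eq_zero_of_not_mem hbQ.1, List.count_eq_zero_of_not_mem hbQ.2.2,
    pairCount_eq_zero_left b a Q₁ hbQ.1, pairCount_eq_zero_left b a Q₂ hbQ.2.2, h11, h2] at hba
  rcases pairCount_trans a b c hab hca hcb R hRa hRb hRc hba with h | h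
  · refine ih Q₁.length (by simp at hn; omega) c b Q₁ (Q₂ ++ a :: R) rfl (hcc.trans hcol) ?_ ?_
      hc12.1 hbQ.1
    · rw [G.adj_comm, hw.adj b c hcb.symm]
      simp [pairCount_append, hab, hab.symm, hca, hca.symm, hcb, hcb.symm, hRa, hRb, hRc,
        List.count_eq_zero_of_not_mem hc12.1, List.count_eq_zero_of_not_mem hc12.2,
        List.count_eq_zero_of_not_mem hbQ.1, List.count_eq_zero_of_not_mem hbQ.2.2,
        pairCount_eq_zero_left b c Q₁ hbQ.1, pairCount_eq_zero_left b c Q₂ hbQ.2.2, h11, h2, h]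
    · simpa using hw
  · refine ih Q₂.length (by simp at hn; omega) a c Q₂ (R ++ b :: Q₁) rfl hcc.symm ?_ ?_
      haQ.2.2 hc12.2
    · rw [G.adj_comm, hw.adj c a hca]
      simp [pairCount_append, hab, hab.symm, hca, hca.symm, hcb, hcb.symm, hRa, hRb, hRc,
        List.count_eq_zero_of_not_mem hc12.1, List.count_eq_zero_of_not_mem hc12.2,
        List.count_eq_zero_of_not_mem haQ.1, List.count_eq_zero_of_not_mem haQ.2.2,
        pairCount_eq_zero_left c a Q₁ hc12.1, pairCount_eq_zero_left c a Q₂ hc12.2, h11, h2, h]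
    · have : Represents ((b :: Q₁) ++ (c :: Q₂ ++ a :: R)) G := by simpa using hw
      simpa using this.rotate

/-- The conclusion of `exists_tight` for any circle graph with a monochromatic edge: rotate a word to
begin with `b` and cut at the first `a`. Interlacement ensures that `b` does not occur in between. -/
lemma exists_tight' (G : SimpleGraph V) (col : V → Bool) (hG : IsCircleGraph G) (a b : V)
    (hcol : col a = col b) (hadj : G.Adj a b) :
      ∃ (a b : V) (Q R : List V), col a = col b ∧ G.Adj a b ∧ Represents (b :: Q ++ a :: R) G ∧
        ∀ c, col c = col a → (Q.count c : ZMod 2) = 0 := by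
  obtain ⟨w, hw⟩ := (isCircleGraph_iff _).1 hG
  have hab : a ≠ b := hadj.ne
  obtain ⟨A, B, rfl⟩ := List.append_of_mem
    (List.count_pos_iff.1 (by rw [hw.count b]; omega : 0 < w.count b))
  have hw1 : Represents (b :: (B ++ A)) G := by simpa using hw.rotate
  have haM : a ∈ B ++ A := by
    have h := hw1.count a
    rw [List.count_cons_of_ne hab.symm] at h
    exact List.count_pos_iff.1 (by omega)
  obtain ⟨Q, R, hQ, he⟩ := List.eq_append_cons_of_mem haM
  rw [hQ] at hw1
  have hw2 : Represents (b :: Q ++ a :: R) G := by simpa using hw1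
  refine exists_tight G col _ a b Q R rfl hcol hadj hw2 he fun hb => ?_
  have h := (hw2.adj b a hab.symm).1 hadj.symm
  have hcb := hw2.count b
  have hca := hw2.count a
  have hpos := List.count_pos_iff.2 hb
  simp only [List.count_append, List.count_cons_of_ne hab, List.count_cons_of_ne hab.symm,
    List.count_cons_self, List.count_eq_zero_of_not_mem he] at hcb hca
  have hRb : R.count b = 0 := by omega
  have hQb : Q.count b = 1 := by omega
  have hRa : R.count a = 1 := by omega
  have h2 : (2 : ZMod 2) = 0 := rfl
  have h11 : (1 + 1 : ZMod 2) = 0 := rfl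
  simp [pairCount_append, hab, hRa, hQb, List.count_eq_zero_of_not_mem he, h11, h2,
    pairCount_eq_zero_left b a R (List.count_eq_zero.1 hRb), pairCount_eq_zero_right b a Q he] at h

/-! ### Removing one monochromatic edge -/

/-- The letters of `V` together with four new letters `x, t, y, z`. -/
inductive ExtLetter (V : Type) : Type
  | old (v : V)
  | x
  | t
  | y
  | z

noncomputable instance {U : Type} : DecidableEq (ExtLetter U) := Classical.decEq _

open ExtLetter

/-- The partial inverse of `ExtLetter.old`, which forgets the new letters. -/
def ExtLetter.getOld {U : Type} : ExtLetter U → Option U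
  | old v => some v
  | _ => none

lemma ExtLetter.getOld_eq {U : Type} (e : ExtLetter U) (u : U) : e.getOld = some u ↔ e = old u := by
  cases e <;> simp [ExtLetter.getOld]

lemma ExtLetter.old_injective {U : Type} : Function.Injective (old : U → ExtLetter U) := fun _ _ h => by
  simpa using h

instance {U : Type} [Finite U] : Finite (ExtLetter U) := by
  refine Finite.of_surjective (fun s : U ⊕ Fin 4 => Sum.elim old ![x, t, y, z] s) ?_
  rintro (v | _ | _ | _ | _)
  · exact ⟨.inl v, rfl⟩
  · exact ⟨.inr 0, rfl⟩
  · exact ⟨.inr 1, rfl⟩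
  · exact ⟨.inr 2, rfl⟩
  · exact ⟨.inr 3, rfl⟩

/-- The word `x t Q t z y x a y b z R`, which replaces `b Q a R` so as to uncross `a` and `b`. -/
def uncrossWord {U : Type} (a b : U) (Q R : List U) : List (ExtLetter U) :=
  [x, t] ++ Q.map old ++ [t, z, y, x, old a, y, old b, z] ++ R.map old

/-- The extension of a colouring in which `x, t` get colour `c` and `y, z` get the other one. -/
def ExtLetter.color {U : Type} (col : U → Bool) (c : Bool) : ExtLetter U → Bool
  | old v => col v
  | x => c
  | t => c
  | y => !c
  | z => !c

lemma filterMap_map_old {U : Type} (Q : List U) : (Q.map old).filterMap ExtLetter.getOld = Q := by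
  induction Q with
  | nil => rfl
  | cons u Q ih => rw [List.map_cons, List.filterMap_cons_some
      (f := ExtLetter.getOld) (a := old u) (b := u) rfl, ih]

lemma filterMap_uncrossWord {U : Type} (a b : U) (Q R : List U) :
    (uncrossWord a b Q R).filterMap ExtLetter.getOld = Q ++ a :: b :: R := by
  simp only [uncrossWord, List.filterMap_append, filterMap_map_old]
  simp [ExtLetter.getOld, List.filterMap_cons]

lemma uncrossWord_count {a b : V} {Q R : List V} (h : ∀ v, (b :: Q ++ a :: R).count v = 2)
    (e : ExtLetter V) : (uncrossWord a b Q R).count e = 2 := by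
  have hm : ∀ (Q : List V) (e : ExtLetter V), (∀ u, e ≠ old u) → (Q.map old).count e = 0 := by
    intro Q e he; rw [List.count_eq_zero]; simpa using fun u _ => (he u).symm
  rcases e with u | _ | _ | _ | _
  · rw [← h u, ← count_filterMap' old _ ExtLetter.getOld_eq, filterMap_uncrossWord]
    simp only [List.count_append, List.count_cons]
    omega
  all_goals simp [uncrossWord, hm]

/-- The graph of `b Q a R` is obtained from that of `uncrossWord a b Q R` by local complementation
at `t, x, z, y, z` in turn, followed by deletion of the new letters. -/
lemma uncrossWord_vertexMinor {a b : V} {Q R : List V} {G : SimpleGraph V}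
    {B : SimpleGraph (ExtLetter V)} (hG : Represents (b :: Q ++ a :: R) G)
    (hB : Represents (uncrossWord a b Q R) B) : IsVertexMinor G B := by
  set q : List (ExtLetter V) := Q.map old with hq
  set r : List (ExtLetter V) := R.map old with hr
  have h0 : Represents ([x] ++ t :: q ++ t :: ([z, y, x, old a, y, old b, z] ++ r)) B := by
    simpa [uncrossWord] using hB
  -- Each `rw` below regroups the word around the next letter at which to complement.
  have h1 := h0.localComp
  rw [show [x] ++ t :: q.reverse ++ t :: ([z, y, x, old a, y, old b, z] ++ r) =
    [] ++ x :: (t :: q.reverse ++ [t, z, y]) ++ x :: ([old a, y, old b, z] ++ r) by simp] at h1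
  have h2 := h1.localComp
  rw [show [] ++ x :: (t :: q.reverse ++ [t, z, y] : List (ExtLetter V)).reverse ++ x :: ([old a, y, old b, z] ++ r) =
    [x, y] ++ z :: (t :: q ++ [t, x, old a, y, old b]) ++ z :: r by simp] at h2
  have h3 := h2.localComp
  rw [show [x, y] ++ z :: (t :: q ++ [t, x, old a, y, old b] : List (ExtLetter V)).reverse ++ z :: r =
    [x] ++ y :: [z, old b] ++ y :: ([old a, x, t] ++ q.reverse ++ [t, z] ++ r) by simp] at h3
  have h4 := h3.localComp
  rw [show [x] ++ y :: ([z, old b] : List (ExtLetter V)).reverse ++ y :: ([old a, x, t] ++ q.reverse ++ [t, z] ++ r) =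
    [x, y, old b] ++ z :: ([y, old a, x, t] ++ q.reverse ++ [t]) ++ z :: r by simp] at h4
  have h5 := h4.localComp
  refine isVertexMinor_iff.2 ⟨_, ((((Relation.ReflTransGen.refl.tail ⟨t, rfl⟩).tail
    ⟨x, rfl⟩).tail ⟨z, rfl⟩).tail ⟨y, rfl⟩).tail ⟨z, rfl⟩, ⟨⟨⟨old, ExtLetter.old_injective⟩, ?_⟩⟩⟩
  intro u v
  by_cases huv : u = v
  · subst huv; simp
  · refine (h5.adj (old u) (old v) (by simpa using huv)).trans ?_
    rw [hG.adj u v huv, ← pairCount_filterMap old _ ExtLetter.getOld_eq]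
    have : ([x, y, old b] ++ z :: ([y, old a, x, t] ++ q.reverse ++ [t]).reverse ++
        z :: r).filterMap ExtLetter.getOld = b :: Q ++ a :: R := by
      simp only [hq, hr, List.filterMap_append, List.reverse_append, List.reverse_reverse,
        List.filterMap_cons, filterMap_map_old, List.reverse_cons]
      simp [ExtLetter.getOld, List.filterMap_cons]
    rw [this]

/-- Every monochromatic edge of the new graph is a monochromatic edge of the old one, and `(a, b)` is
no longer such an edge. The pair `(b, a)` need not be excluded for the induction to go through. -/
lemma uncrossWord_mono {a b : V} {Q R : List V} {G : SimpleGraph V} {col : V → Bool}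
    {B : SimpleGraph (ExtLetter V)} (hG : Represents (b :: Q ++ a :: R) G)
    (hB : Represents (uncrossWord a b Q R) B) (hab : G.Adj a b) (hcol : col a = col b)
    (hQ : ∀ c, col c = col a → (Q.count c : ZMod 2) = 0) (p q : ExtLetter V) (hpq : B.Adj p q)
    (hc : ExtLetter.color col (col a) p = ExtLetter.color col (col a) q) :
    ∃ u v, p = old u ∧ q = old v ∧ G.Adj u v ∧ (u, v) ≠ (a, b) := by
  have h11 : (1 + 1 : ZMod 2) = 0 := rfl
  have h2 : (2 : ZMod 2) = 0 := rfl
  have hm : ∀ (Q : List V) (e : ExtLetter V), (∀ u, e ≠ old u) → (Q.map old).count e = 0 := by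
    intro Q e he; rw [List.count_eq_zero]; simpa using fun u _ => (he u).symm
  have hmo : ∀ (Q : List V) (u : V), (Q.map old).count (old u) = Q.count u := fun Q u =>
    List.count_map_of_injective _ _ ExtLetter.old_injective _
  have hp : ∀ (Q : List V) (d e : ExtLetter V), (∀ u, e ≠ old u) → pairCount d e (Q.map old) = 0 := by
    intro Q d e he
    exact pairCount_eq_zero_right _ _ _ (by simpa using fun u _ => (he u).symm)
  -- A new letter is not adjacent to an old letter of its own colour.
  have mixed : ∀ u e, (∀ v, e ≠ old v) → col u = ExtLetter.color col (col a) e →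
      ¬ B.Adj (old u) e := by
    intro u e he hue
    rw [hB.adj _ _ (he u).symm]
    have dbl : (Q.count u : ZMod 2) + Q.count u = 0 := CharTwo.add_self_eq_zero _
    rcases e with v | _ | _ | _ | _
    · exact absurd rfl (he v)
    · simp [uncrossWord, pairCount_append, hm, hmo, hp, hQ u hue]
    · simp [uncrossWord, pairCount_append, hm, hmo, hp, hQ u hue]
    · have hua : a ≠ u := by rintro rfl; simp [ExtLetter.color] at hue
      have hub : b ≠ u := by rintro rfl; simp [ExtLetter.color, hcol] at hue
      simp [uncrossWord, pairCount_append, hm, hmo, hp, hua, hub, h11, h2]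
    · have hua : a ≠ u := by rintro rfl; simp [ExtLetter.color] at hue
      have hub : b ≠ u := by rintro rfl; simp [ExtLetter.color, hcol] at hue
      simp [uncrossWord, pairCount_append, hm, hmo, hp, hua, hub, h11, h2]
  by_cases hpo : ∃ u, p = old u
  · obtain ⟨u, rfl⟩ := hpo
    by_cases hqo : ∃ v, q = old v
    · obtain ⟨v, rfl⟩ := hqo
      have huv : u ≠ v := by rintro rfl; exact hpq.ne rfl
      refine ⟨u, v, rfl, rfl, ?_⟩
      rw [hB.adj _ _ hpq.ne, ← pairCount_filterMap old _ ExtLetter.getOld_eq,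
        filterMap_uncrossWord] at hpq
      simp only [ExtLetter.color] at hc
      have hne : a ≠ b := hab.ne
      -- Up to letters of even multiplicity in `Q`, moving `b` from before `Q` to just after `a`
      -- only changes its order relative to `a`.
      have key : pairCount u v (b :: Q ++ a :: R) = pairCount u v (Q ++ a :: b :: R) +
          ((if b = u ∧ a = v then 1 else 0) + if b = v ∧ a = u then 1 else 0) := by
        by_cases hbu : b = u
        · subst hbu
          have := hQ v (hc.symm.trans hcol.symm)
          by_cases hav : a = v
          · subst hav
            simp [pairCount_append, hne, hne.symm, this]; ring
          · simp [pairCount_append, hne, huv, hav, this]; ring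
        by_cases hbv : b = v
        · subst hbv
          have := hQ u (hc.trans hcol.symm)
          by_cases hau : a = u
          · subst hau
            simp [pairCount_append, hne, hne.symm, this]
            linear_combination -h2
          · simp [pairCount_append, hne, hne.symm, hbu, hau, this]
        · simp [pairCount_append, hbu, hbv, List.count_cons]
      by_cases h1 : u = a ∧ v = b
      · obtain ⟨rfl, rfl⟩ := h1
        have := (hG.adj _ _ huv).1 hab
        rw [key, hpq] at this
        simp [huv.symm] at this
      refine ⟨?_, by simpa using h1⟩
      by_cases h3 : u = b ∧ v = a
      · obtain ⟨rfl, rfl⟩ := h3; exact hab.symm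
      · rw [hG.adj _ _ huv, key, hpq, if_neg (by tauto), if_neg (by tauto)]; rfl
    · exact absurd hpq (mixed u q (by simpa using hqo) hc)
  · by_cases hqo : ∃ v, q = old v
    · obtain ⟨v, rfl⟩ := hqo
      exact absurd hpq.symm (mixed v p (by simpa using hpo) hc.symm)
    · exfalso
      have hij := hpq.ne
      rw [hB.adj _ _ hpq.ne] at hpq
      rcases p with _ | _ | _ | _ | _ <;> rcases q with _ | _ | _ | _ | _ <;>
        simp [ExtLetter.color] at hc hij hpo hqo <;>
        simp [uncrossWord, pairCount_append, hm, hmo, hp, h11, h2] at hpq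

end

/-! ### Induction on the number of monochromatic edges -/

/-- Induction on the number `n` of ordered pairs of adjacent vertices that get the same colour. -/
lemma exists_bipartite (n : ℕ) : ∀ (V : Type) [Finite V] [DecidableEq V] (G : SimpleGraph V)
    (col : V → Bool), {p : V × V | G.Adj p.1 p.2 ∧ col p.1 = col p.2}.ncard = n →
    IsCircleGraph G → ∃ (W : Type) (_ : Finite W) (_ : DecidableEq W) (B : SimpleGraph W),
      B.Colorable 2 ∧ IsCircleGraph B ∧ IsVertexMinor G B := by
  induction n using Nat.strong_induction_on with
  | _ n ih =>
  intro V _ _ G col hn hG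
  by_cases hex : ∃ a b, col a = col b ∧ G.Adj a b
  · obtain ⟨a, b, hcol, hab⟩ := hex
    obtain ⟨a, b, Q, R, hcol, hab, hw, hQ⟩ := exists_tight' G col hG a b hcol hab
    obtain ⟨B, hB⟩ := exists_rep _ (uncrossWord_count hw.count)
    have hlt : {p : ExtLetter V × ExtLetter V | B.Adj p.1 p.2 ∧
        ExtLetter.color col (col a) p.1 = ExtLetter.color col (col a) p.2}.ncard < n := by
      rw [← hn]
      calc _ ≤ (Set.image (Prod.map ExtLetter.old ExtLetter.old)
              ({p : V × V | G.Adj p.1 p.2 ∧ col p.1 = col p.2} \ {(a, b)})).ncard := by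
            refine Set.ncard_le_ncard ?_ (Set.toFinite _)
            rintro ⟨p, q⟩ ⟨hpq, hc⟩
            obtain ⟨u, v, rfl, rfl, huv, hne⟩ := uncrossWord_mono hw hB hab hcol hQ p q hpq hc
            exact ⟨(u, v), ⟨⟨huv, hc⟩, hne⟩, rfl⟩
        _ ≤ _ := Set.ncard_image_le (Set.toFinite _)
        _ < _ := Set.ncard_sdiff_singleton_lt_of_mem ⟨hab, hcol⟩ (Set.toFinite _)
    obtain ⟨W, h1, h2, K, hK2, hK, hm⟩ := ih _ hlt (ExtLetter V) B _ rfl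
      ((isCircleGraph_iff _).2 ⟨_, hB⟩)
    exact ⟨W, h1, h2, K, hK2, hK, (uncrossWord_vertexMinor hw hB).trans hm⟩
  · push Not at hex
    refine ⟨V, inferInstance, inferInstance, G, ?_, hG, isVertexMinor_iff.2
      ⟨G, Relation.ReflTransGen.refl, ⟨SimpleGraph.Embedding.refl⟩⟩⟩
    have : G.Coloring Bool := SimpleGraph.Coloring.mk col fun {u v} h e => hex u v e h
    simpa using this.colorable

/-- A simple graph is a circle graph iff it is isomorphic to a
vertex-minor of some bipartite circle graph. -/
theorem circle_iff_vertex_minor_of_bipartite_circle {V : Type} [Fintype V] [DecidableEq V]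
    (G : SimpleGraph V) :
    IsCircleGraph G ↔
      ∃ (n : ℕ) (B : SimpleGraph (Fin n)), B.Colorable 2 ∧ IsCircleGraph B ∧
        IsVertexMinor G B := by
  constructor
  · intro hG
    obtain ⟨W, _, _, B, hB2, hB, hm⟩ := exists_bipartite _ V G (fun _ => true) rfl hG
    obtain ⟨n, ⟨e⟩⟩ := Finite.exists_equiv_fin W
    -- The graph `B` transported to `Fin n` is `B.map e.toEmbedding`.
    have φ : B.map e.toEmbedding ≃g B := (SimpleGraph.Iso.map e B).symm
    exact ⟨n, B.map e.toEmbedding, hB2.of_hom φ.toHom, hB.of_embedding φ.toEmbedding, hm.trans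
      (isVertexMinor_iff.2 ⟨_, Relation.ReflTransGen.refl, ⟨φ.symm.toEmbedding⟩⟩)⟩
  · rintro ⟨n, B, -, hB, hm⟩
    obtain ⟨B', hB', ⟨f⟩⟩ := isVertexMinor_iff.1 hm
    exact (hB.of_locallyEquiv hB').of_embedding f
end

section
/- Let F be a connected simple 4-regular graph, let C be an Euler circuit of F, and let G be the interlacement graph of C. If F contains a cycle of length k, then G has a transverse circuit of size at most k. -/
/-!
The circuit `C` visits every vertex `w` exactly twice, so its two visits to `w` cut `C` into two
arcs. Let `side w` be the `ZMod 2`-valued indicator of one of these arcs, as a function on the edges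
of `F` (an edge is identified with its position on `C`). The heart of the proof is a local
computation (`exists_type`): if `a ≠ b` are two edges of `F` at a vertex `v`, then for one of the
three columns `φ(v)`, `χ(v)`, `ψ(v)` of `IAS(G)` the `w`-entry is `side w a + side w b`, for every
`w` simultaneously. The column is `φ(v)` when `a`, `b` are consecutive on `C`; it is `χ(v)` when one
of them enters and the other leaves `v` at different visits; and it is `ψ(v)` when both enter or
both leave `v`. Indeed for `v ≠ w` the two visits to `v` lie on different arcs of `w` exactly when
`v` and `w` are interlaced, and for `v = w` the arc changes at each visit.

Given a cycle of length `k` in `F`, take for each of its vertices the column belonging to the two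
cycle edges there. These `k` columns come from distinct vertex triples, and their sum vanishes,
because each cycle edge contributes its `side` twice. A minimal dependent subset is the required
transverse circuit.
-/

open scoped Classical

/-! ## Isotropic matroids -/

/-- The column of `IAS(G) = (I | A | I + A)` indexed by `p = (v, i)`:
`i = 0` gives `φ(v)`, `i = 1` gives `χ(v)`, `i = 2` gives `ψ(v)`. -/
noncomputable def iasCol {V : Type} (G : SimpleGraph V) (p : V × Fin 3) : V → ZMod 2 :=
  fun w =>
    (if p.2 = 0 ∨ p.2 = 2 then (if w = p.1 then (1 : ZMod 2) else 0) else 0) +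
    (if p.2 = 1 ∨ p.2 = 2 then (if G.Adj w p.1 then (1 : ZMod 2) else 0) else 0)

/-- `S` is independent in the isotropic matroid `M[IAS(G)]`. -/
def IasIndep {V : Type} (G : SimpleGraph V) (S : Finset (V × Fin 3)) : Prop :=
  LinearIndependent (ZMod 2) (fun p : S => iasCol G p.1)

/-- `C` is a circuit of `M[IAS(G)]`: a minimal dependent set. -/
def IasCircuit {V : Type} (G : SimpleGraph V) (C : Finset (V × Fin 3)) : Prop :=
  ¬ IasIndep G C ∧ ∀ D ⊂ C, IasIndep G D

/-- `T` is a transversal of `W(G)`: exactly one element of each vertex triple. -/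
def IsTransversal {V : Type} (T : Finset (V × Fin 3)) : Prop :=
  ∀ v : V, ∃! i : Fin 3, (v, i) ∈ T

/-- `S` is a subtransversal of `W(G)`: at most one element of each vertex triple. -/
def IsSubtransversal {V : Type} (S : Finset (V × Fin 3)) : Prop :=
  ∀ v : V, ∀ i j : Fin 3, (v, i) ∈ S → (v, j) ∈ S → i = j

/-- A transverse circuit of `G`: a circuit of `M[IAS(G)]` contained in a transversal. -/
def TransverseCircuit {V : Type} (G : SimpleGraph V) (C : Finset (V × Fin 3)) : Prop :=
  IasCircuit G C ∧ ∃ T : Finset (V × Fin 3), IsTransversal T ∧ C ⊆ T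

/-! ## Euler circuits and interlacement graphs -/

/-- The interlacement graph of a closed walk `w`: two distinct vertices are adjacent iff
their occurrences alternate around the cyclic vertex sequence of `w`. -/
def interlacement {V : Type} {F : SimpleGraph V} {x : V} (w : F.Walk x x) :
    SimpleGraph V :=
  SimpleGraph.fromRel (fun u v => Interlaced w.support.dropLast u v)

/-- The complete bipartite graph `K_{4,4}`. -/
def K44 : SimpleGraph (Fin 4 ⊕ Fin 4) := completeBipartiteGraph (Fin 4) (Fin 4)

/-! ### Dependent subtransversals contain transverse circuits -/

lemma not_iasIndep_of_sum_eq_zero {V : Type} (G : SimpleGraph V) (S : Finset (V × Fin 3))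
    (hne : S.Nonempty) (hsum : ∑ p ∈ S, iasCol G p = 0) : ¬ IasIndep G S := by
  intro h
  obtain ⟨p, hp⟩ := hne
  have h1 := linearIndependent_iff'.1 h Finset.univ (fun _ => 1)
    (by simpa [Finset.sum_attach S (fun p => iasCol G p)] using hsum) ⟨p, hp⟩ (Finset.mem_univ _)
  exact one_ne_zero h1

lemma exists_transverseCircuit {V : Type} [Fintype V] (G : SimpleGraph V)
    (S : Finset (V × Fin 3)) (hS : IsSubtransversal S) (hdep : ¬ IasIndep G S) :
    ∃ D : Finset (V × Fin 3), TransverseCircuit G D ∧ D.card ≤ S.card := by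
  obtain ⟨D, hDS, hD⟩ :=
    exists_minimal_le_of_wellFoundedLT (fun T : Finset (V × Fin 3) => ¬ IasIndep G T) S hdep
  refine ⟨D, ⟨⟨hD.prop, fun E hE => ?_⟩, ?_⟩, Finset.card_le_card hDS⟩
  · by_contra hcon
    exact hE.2 (hD.le_of_le hcon hE.1)
  · -- Complete `S` by the elements `φ(v)` of the vertex triples it misses.
    refine ⟨S ∪ Finset.univ.filter (fun p => p.2 = 0 ∧ ∀ i, (p.1, i) ∉ S), fun v => ?_,
      hDS.trans Finset.subset_union_left⟩
    by_cases h : ∃ i, (v, i) ∈ S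
    · obtain ⟨i, hi⟩ := h
      refine ⟨i, by simp [hi], fun j hj => ?_⟩
      simp only [Finset.mem_union, Finset.mem_filter, Finset.mem_univ, true_and] at hj
      rcases hj with hj | hj
      · exact hS v j i hj hi
      · exact absurd hi (hj.2 i)
    · push Not at h
      refine ⟨0, by simp [h], fun j hj => ?_⟩
      simpa [h] using hj

/-! ### Euler circuits of 4-regular graphs as double occurrence words -/

lemma edges_getElem_eq {V : Type} {F : SimpleGraph V} {u v : V} (C : F.Walk u v) (i : ℕ)
    (h : i < C.edges.length) : C.edges[i] = s(C.getVert i, C.getVert (i + 1)) := by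
  rw [SimpleGraph.Walk.getElem_edges_eq_edge_getElem_darts,
    SimpleGraph.Walk.darts_getElem_eq_getVert]
  rfl

lemma edge_index_inj {V : Type} {F : SimpleGraph V} {u v : V} {C : F.Walk u v} (hC : C.IsTrail)
    {i j : ℕ} (hi : i < C.length) (hj : j < C.length)
    (h : s(C.getVert i, C.getVert (i + 1)) = s(C.getVert j, C.getVert (j + 1))) : i = j := by
  have hi' : i < C.edges.length := by simpa using hi
  have hj' : j < C.edges.length := by simpa using hj
  rw [← edges_getElem_eq C i hi', ← edges_getElem_eq C j hj'] at h
  exact (hC.edges_nodup.getElem_inj_iff).1 h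

lemma exists_edge_index {V : Type} [DecidableEq V] {F : SimpleGraph V} {u v : V} {C : F.Walk u v}
    (hC : C.IsEulerian) {a b : V} (h : F.Adj a b) :
    ∃ i < C.length, s(C.getVert i, C.getVert (i + 1)) = s(a, b) := by
  have hm : s(a, b) ∈ C.edges := hC.mem_edges_iff.2 h
  obtain ⟨i, hi, he⟩ := List.getElem_of_mem hm
  exact ⟨i, by simpa using hi, by rw [← edges_getElem_eq C i hi, he]⟩

/-- A shift by one does not change a sum over the positions of a closed word. -/
lemma sum_range_shift {M : Type} [AddCommMonoid M] (f : ℕ → M) (m : ℕ) (h : f m = f 0) :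
    ∑ i ∈ Finset.range m, f (i + 1) = ∑ i ∈ Finset.range m, f i := by
  cases m with
  | zero => simp
  | succ n => rw [Finset.sum_range_succ, h, Finset.sum_range_succ' f]

lemma card_occurrences {V : Type} [DecidableEq V] {F : SimpleGraph V}
    (hreg : ∀ v, degv F v = 4) {x : V} {C : F.Walk x x} (hC : C.IsEulerian) (v : V) :
    ((Finset.range C.length).filter (fun i => C.getVert i = v)).card = 2 := by
  set g := C.getVert with hg
  set O := (Finset.range C.length).filter (fun i => g i = v) with hO
  set I := (Finset.range C.length).filter (fun i => g (i + 1) = v) with hI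
  have hadj : ∀ i < C.length, F.Adj (g i) (g (i + 1)) := fun i hi => C.adj_getVert_succ hi
  have hOI : I.card = O.card := by
    rw [hO, hI, Finset.card_filter, Finset.card_filter]
    exact sum_range_shift (fun i => if g i = v then 1 else 0) C.length (by simp [hg])
  have hdisj : Disjoint O I := by
    rw [Finset.disjoint_left]
    intro i hi hi'
    simp only [hO, hI, Finset.mem_filter, Finset.mem_range] at hi hi'
    exact (hadj i hi.1).ne (hi.2.trans hi'.2.symm)
  -- `f i` is the far end of the `i`-th edge, seen from `v`.
  let f : ℕ → V := fun i => if g i = v then g (i + 1) else g i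
  have hf : ∀ i ∈ O ∪ I, i < C.length ∧ s(v, f i) = s(g i, g (i + 1)) := by
    intro i hi
    simp only [hO, hI, Finset.mem_union, Finset.mem_filter, Finset.mem_range] at hi
    refine ⟨by tauto, ?_⟩
    by_cases h : g i = v
    · simp [f, h]
    · have : g (i + 1) = v := by tauto
      simp [f, h, this, Sym2.eq_swap]
  have hinj : Set.InjOn f (O ∪ I : Finset ℕ) := by
    intro i hi j hj hij
    obtain ⟨hi1, hi2⟩ := hf i hi
    obtain ⟨hj1, hj2⟩ := hf j hj
    exact edge_index_inj hC.isTrail hi1 hj1 (by rw [← hg, ← hi2, ← hj2, hij])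
  have himg : F.neighborSet v = ((O ∪ I).image f : Finset V) := by
    ext u
    simp only [SimpleGraph.mem_neighborSet, Finset.coe_image, Set.mem_image, Finset.mem_coe]
    constructor
    · intro h
      obtain ⟨i, hi, he⟩ := exists_edge_index hC h
      rw [← hg] at he
      have hmem : i ∈ O ∪ I := by
        simp only [hO, hI, Finset.mem_union, Finset.mem_filter, Finset.mem_range]
        rcases Sym2.eq_iff.1 he with h1 | h1 <;> tauto
      refine ⟨i, hmem, ?_⟩
      exact Sym2.congr_right.1 ((hf i hmem).2.trans he)
    · rintro ⟨i, hi, rfl⟩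
      obtain ⟨h1, h2⟩ := hf i hi
      rw [← SimpleGraph.mem_edgeSet, h2]
      exact hadj i h1
  have h4 := hreg v
  rw [degv, himg, Set.ncard_coe_finset, Finset.card_image_of_injOn hinj,
    Finset.card_union_of_disjoint hdisj, hOI] at h4
  lia

lemma exists_two_positions {V : Type} [DecidableEq V] {F : SimpleGraph V}
    (hreg : ∀ v, degv F v = 4) {x : V} {C : F.Walk x x} (hC : C.IsEulerian) (v : V) :
    ∃ p q : ℕ, p < q ∧ q < C.length ∧ ∀ i < C.length, C.getVert i = v ↔ i = p ∨ i = q := by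
  obtain ⟨a, b, hab, h⟩ := Finset.card_eq_two.1 (card_occurrences hreg hC v)
  have h' : ∀ i, (i < C.length ∧ C.getVert i = v) ↔ i = a ∨ i = b := by
    intro i
    have := congrArg (fun S => i ∈ S) h
    simpa using this
  have ha := (h' a).2 (Or.inl rfl)
  have hb := (h' b).2 (Or.inr rfl)
  rcases lt_or_gt_of_ne hab with hlt | hlt
  · exact ⟨a, b, hlt, hb.1, fun i hi => by rw [← h' i]; tauto⟩
  · exact ⟨b, a, hlt, ha.1, fun i hi => by rw [or_comm, ← h' i]; tauto⟩

/-! ### The two arcs at a vertex -/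

/-- Indicator of the arc of edge positions `p, …, q - 1`. When `p < q` are the two visits of a
closed walk to a vertex, this is one of the two arcs into which they cut the walk. -/
def side (p q i : ℕ) : ZMod 2 := if p ≤ i ∧ i < q then 1 else 0

/-- `P v < Q v` are the two positions of each vertex `v` in the closed walk `C`. -/
def IsPositions {V : Type} {F : SimpleGraph V} {x : V} (C : F.Walk x x) (P Q : V → ℕ) : Prop :=
  ∀ v, P v < Q v ∧ Q v < C.length ∧ ∀ i < C.length, C.getVert i = v ↔ i = P v ∨ i = Q v

lemma interlaced_iff {V : Type} {F : SimpleGraph V} {x : V} {C : F.Walk x x} {P Q : V → ℕ}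
    (h : IsPositions C P Q) {u v : V} :
    Interlaced C.support.dropLast u v ↔
      (P u < P v ∧ P v < Q u ∧ Q u < Q v) ∨ (P v < P u ∧ P u < Q v ∧ Q v < Q u) := by
  have hlen : C.support.dropLast.length = C.length := by simp
  have hget : ∀ i : Fin C.support.dropLast.length,
      C.support.dropLast.get i = C.getVert i := by
    intro i
    rw [List.get_eq_getElem, List.getElem_dropLast,
      SimpleGraph.Walk.support_getElem_eq_getVert]
  obtain ⟨u1, u2, u3⟩ := h u
  obtain ⟨v1, v2, v3⟩ := h v
  unfold Interlaced
  simp only [hget]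
  constructor
  · rintro ⟨⟨i, hi⟩, ⟨j, hj⟩, ⟨k, hk⟩, ⟨l, hl⟩, hij, hjk, hkl, hh⟩
    rw [hlen] at hi hj hk hl
    simp only [Fin.mk_lt_mk] at hij hjk hkl
    rcases hh with ⟨a, b, c, d⟩ | ⟨a, b, c, d⟩
    · have a := (u3 i hi).1 a
      have b := (v3 j hj).1 b
      have c := (u3 k hk).1 c
      have d := (v3 l hl).1 d
      lia
    · have a := (v3 i hi).1 a
      have b := (u3 j hj).1 b
      have c := (v3 k hk).1 c
      have d := (u3 l hl).1 d
      lia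
  · have a1 := (u3 (P u) (by lia)).2 (Or.inl rfl)
    have a2 := (u3 (Q u) (by lia)).2 (Or.inr rfl)
    have b1 := (v3 (P v) (by lia)).2 (Or.inl rfl)
    have b2 := (v3 (Q v) (by lia)).2 (Or.inr rfl)
    rintro (⟨h1, h2, h3⟩ | ⟨h1, h2, h3⟩)
    · exact ⟨⟨P u, by lia⟩, ⟨P v, by lia⟩, ⟨Q u, by lia⟩, ⟨Q v, by lia⟩, h1, h2, h3,
        Or.inl ⟨a1, b1, a2, b2⟩⟩
    · exact ⟨⟨P v, by lia⟩, ⟨P u, by lia⟩, ⟨Q v, by lia⟩, ⟨Q u, by lia⟩, h1, h2, h3,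
        Or.inr ⟨b1, a1, b2, a2⟩⟩

/-- The visits to `v` lie on different arcs of `w` iff `v` and `w` are equal or interlaced. -/
lemma side_add_side {V : Type} {F : SimpleGraph V} {x : V} {C : F.Walk x x} {P Q : V → ℕ}
    (h : IsPositions C P Q) (v w : V) :
    side (P w) (Q w) (P v) + side (P w) (Q w) (Q v) =
      (if w = v then (1 : ZMod 2) else 0) + (if (interlacement C).Adj w v then 1 else 0) := by
  by_cases hwv : w = v
  · subst hwv
    have := (h w).1
    simp [side, this]
  · have hadj : (interlacement C).Adj w v ↔
        (P w < P v ∧ P v < Q w ∧ Q w < Q v) ∨ (P v < P w ∧ P w < Q v ∧ Q v < Q w) := by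
      simp only [interlacement, SimpleGraph.fromRel_adj, interlaced_iff h]
      tauto
    obtain ⟨v1, v2, v3⟩ := h v
    obtain ⟨w1, w2, w3⟩ := h w
    have hne : ∀ i j, (i = P v ∨ i = Q v) → (j = P w ∨ j = Q w) → i ≠ j := by
      rintro i j hi hj rfl
      have hi' : i < C.length := by lia
      exact hwv (((w3 i hi').2 hj).symm.trans ((v3 i hi').2 hi))
    have n1 := hne (P v) (P w) (by simp) (by simp)
    have n2 := hne (P v) (Q w) (by simp) (by simp)
    have n3 := hne (Q v) (P w) (by simp) (by simp)
    have n4 := hne (Q v) (Q w) (by simp) (by simp)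
    simp only [side, hadj, if_neg hwv]
    have h11 : (1 : ZMod 2) + 1 = 0 := by decide
    split_ifs <;> first | lia | simp [h11]

/-- Every edge at `v` leaves or enters `v` at one of its two visits; the side of an entering edge
differs from that of the visit exactly when `w = v`. The two edges at one visit are distinguished
by `ε`. -/
lemma exists_visit {V : Type} {F : SimpleGraph V} {x : V} {C : F.Walk x x} {P Q : V → ℕ}
    (h : IsPositions C P Q) (v : V) (a : ℕ) (ha : a < C.length)
    (hav : C.getVert a = v ∨ C.getVert (a + 1) = v) :
    ∃ (y : ℕ) (ε : Bool), (y = P v ∨ y = Q v) ∧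
      (∀ w, side (P w) (Q w) a = side (P w) (Q w) y + if ε ∧ w = v then 1 else 0) ∧
      (if ε then (a + 1 = y ∨ (y = 0 ∧ a + 1 = C.length)) else a = y) := by
  by_cases h1 : C.getVert a = v
  · exact ⟨a, false, ((h v).2.2 a ha).1 h1, by simp, by simp⟩
  · have h2 : C.getVert (a + 1) = v := by tauto
    -- `y` is the cyclic successor of `a`.
    obtain ⟨y, hy, hya, hyv⟩ : ∃ y < C.length,
        (a + 1 = y ∨ (y = 0 ∧ a + 1 = C.length)) ∧ C.getVert y = v := by
      by_cases hl : a + 1 = C.length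
      · refine ⟨0, by lia, Or.inr ⟨rfl, hl⟩, ?_⟩
        rw [← h2, hl]; simp
      · exact ⟨a + 1, by lia, Or.inl rfl, h2⟩
    have hyPQ := ((h v).2.2 y hy).1 hyv
    refine ⟨y, true, hyPQ, fun w => ?_, by simpa using hya⟩
    obtain ⟨w1, w2, w3⟩ := h w
    have h11 : (1 : ZMod 2) + 1 = 0 := by decide
    by_cases hwv : w = v
    · subst hwv
      simp only [side]
      split_ifs <;> first | simp_all; done | lia
    · have : ¬ (y = P w ∨ y = Q w) := fun hc => hwv (((w3 y hy).2 hc).symm.trans hyv)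
      have e : (P w ≤ a ∧ a < Q w) ↔ (P w ≤ y ∧ y < Q w) := by lia
      simp [side, hwv, e]

/-- Two distinct edges at `v` single out one of the columns `φ(v)`, `χ(v)`, `ψ(v)`. -/
lemma exists_type {V : Type} {F : SimpleGraph V} {x : V} {C : F.Walk x x} {P Q : V → ℕ}
    (h : IsPositions C P Q) (v : V) (a b : ℕ) (ha : a < C.length) (hb : b < C.length)
    (hab : a ≠ b) (hav : C.getVert a = v ∨ C.getVert (a + 1) = v)
    (hbv : C.getVert b = v ∨ C.getVert (b + 1) = v) :
    ∃ t : Fin 3, ∀ w, side (P w) (Q w) a + side (P w) (Q w) b =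
      iasCol (interlacement C) (v, t) w := by
  obtain ⟨y, ε, hy, hya, hy2⟩ := exists_visit h v a ha hav
  obtain ⟨z, δ, hz, hzb, hz2⟩ := exists_visit h v b hb hbv
  have h2 : ∀ r : ZMod 2, r + r = 0 := by decide
  by_cases hyz : y = z
  · subst hyz
    have hne : ε ≠ δ := by
      rintro rfl
      cases ε <;> simp at hy2 hz2 <;> lia
    refine ⟨0, fun w => ?_⟩
    rw [hya, hzb, add_add_add_comm, h2, zero_add]
    cases ε <;> cases δ <;> simp_all [iasCol]
  · have hs : ∀ w, side (P w) (Q w) y + side (P w) (Q w) z =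
        (if w = v then (1 : ZMod 2) else 0) + (if (interlacement C).Adj w v then 1 else 0) := by
      intro w
      rw [← side_add_side h v w]
      rcases hy with rfl | rfl <;> rcases hz with rfl | rfl
      · exact absurd rfl hyz
      · rfl
      · exact add_comm _ _
      · exact absurd rfl hyz
    by_cases hεδ : ε = δ
    · refine ⟨2, fun w => ?_⟩
      rw [hya, hzb, add_add_add_comm, hεδ, h2, add_zero, hs]
      simp [iasCol]
    · refine ⟨1, fun w => ?_⟩
      rw [hya, hzb, add_add_add_comm, hs]
      have : ((if ε ∧ w = v then (1 : ZMod 2) else 0) + if δ ∧ w = v then 1 else 0) =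
          if w = v then 1 else 0 := by
        cases ε <;> cases δ <;> simp_all
      rw [this, add_right_comm, h2, zero_add]
      simp [iasCol]

/-! ### Summation around a cycle -/

/-- Let `F` be a connected simple 4-regular graph with an Euler
circuit `C`, and let `G` be the interlacement graph of `C`.  If `F` has a cycle of
length `k`, then `G` has a transverse circuit of size at most `k`. -/
theorem cycle_gives_small_transverse_circuit {V : Type} [Fintype V] [DecidableEq V]
    (F : SimpleGraph V) (hconn : F.Connected) (hreg : ∀ v, degv F v = 4)
    {x : V} (C : F.Walk x x) (hC : C.IsEulerian) (k : ℕ)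
    (hcyc : ∃ (v : V) (c : F.Walk v v), c.IsCycle ∧ c.length = k) :
    ∃ Ct : Finset (V × Fin 3), TransverseCircuit (interlacement C) Ct ∧ Ct.card ≤ k := by
  obtain ⟨v₀, c, hc, rfl⟩ := hcyc
  have h3 := hc.three_le_length
  choose P Q hPQ using exists_two_positions hreg hC
  have hpos : IsPositions C P Q := hPQ
  -- `a j` is the position on `C` of the `j`-th edge of the cycle, with `j` read cyclically.
  have hidx : ∀ j : ℕ, ∃ i < C.length, s(C.getVert i, C.getVert (i + 1)) =
      s(c.getVert (j % c.length), c.getVert (j % c.length + 1)) := fun j =>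
    exists_edge_index hC (c.adj_getVert_succ (Nat.mod_lt _ (by lia)))
  choose a ha hae using hidx
  have hinc : ∀ i u u' : V, ∀ n, s(C.getVert n, C.getVert (n + 1)) = s(u, u') → (i = u ∨ i = u') →
      (C.getVert n = i ∨ C.getVert (n + 1) = i) := by
    intro i u u' n he hi
    rcases Sym2.eq_iff.1 he with h1 | h1 <;> rcases hi with rfl | rfl <;> tauto
  have hsucc : ∀ j < c.length, c.getVert ((j + 1) % c.length) = c.getVert (j + 1) := by
    intro j hj
    by_cases hl : j + 1 = c.length
    · rw [hl]; simp
    · rw [Nat.mod_eq_of_lt (by lia)]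
  have htype : ∀ j : ℕ, ∃ t : Fin 3, j < c.length → ∀ w,
      side (P w) (Q w) (a j) + side (P w) (Q w) (a (j + 1)) =
        iasCol (interlacement C) (c.getVert (j + 1), t) w := by
    intro j
    by_cases hj : j < c.length
    · have hne : a j ≠ a (j + 1) := by
        intro heq
        have e1 := hae j
        rw [heq, hae (j + 1)] at e1
        have := edge_index_inj hc.isTrail (Nat.mod_lt _ (by lia)) (Nat.mod_lt _ (by lia)) e1
        rw [Nat.mod_eq_of_lt hj] at this
        by_cases hl : j + 1 = c.length
        · rw [hl, Nat.mod_self] at this; lia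
        · rw [Nat.mod_eq_of_lt (by lia)] at this; lia
      obtain ⟨t, ht⟩ := exists_type hpos (c.getVert (j + 1)) (a j) (a (j + 1)) (ha _) (ha _) hne
        (hinc _ _ _ _ (hae j) (by rw [Nat.mod_eq_of_lt hj]; exact Or.inr rfl))
        (hinc _ _ _ _ (hae (j + 1)) (Or.inl (hsucc j hj).symm))
      exact ⟨t, fun _ => ht⟩
    · exact ⟨0, fun h => absurd h hj⟩
  choose t ht using htype
  have hinj : ∀ i < c.length, ∀ j < c.length, c.getVert (i + 1) = c.getVert (j + 1) → i = j := by
    intro i hi j hj hij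
    have := hc.getVert_injOn (show i + 1 ∈ {n | 1 ≤ n ∧ n ≤ c.length} from ⟨by lia, by lia⟩)
      (show j + 1 ∈ {n | 1 ≤ n ∧ n ≤ c.length} from ⟨by lia, by lia⟩) hij
    lia
  let e : ℕ → V × Fin 3 := fun j => (c.getVert (j + 1), t j)
  let S : Finset (V × Fin 3) := (Finset.range c.length).image e
  have hS : IsSubtransversal S := by
    intro v i j hi hj
    simp only [S, e, Finset.mem_image, Finset.mem_range, Prod.mk.injEq] at hi hj
    obtain ⟨n, hn, hn1, rfl⟩ := hi
    obtain ⟨n', hn', hn1', rfl⟩ := hj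
    rw [hinj n hn n' hn' (hn1.trans hn1'.symm)]
  have hsum : ∑ p ∈ S, iasCol (interlacement C) p = 0 := by
    rw [Finset.sum_image (by
      intro i hi j hj hij
      exact hinj i (by simpa using hi) j (by simpa using hj) (congrArg Prod.fst hij))]
    ext w
    rw [Finset.sum_apply]
    calc ∑ j ∈ Finset.range c.length, iasCol (interlacement C) (e j) w
        = ∑ j ∈ Finset.range c.length,
            (side (P w) (Q w) (a j) + side (P w) (Q w) (a (j + 1))) :=
          Finset.sum_congr rfl fun j hj => (ht j (Finset.mem_range.1 hj) w).symm
      _ = 0 := by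
          have hper : a c.length = a 0 := by
            refine edge_index_inj hC.isTrail (ha _) (ha _) ?_
            rw [hae, hae]; simp
          rw [Finset.sum_add_distrib,
            sum_range_shift (fun j => side (P w) (Q w) (a j)) c.length (by simp only [hper])]
          exact (by decide : ∀ r : ZMod 2, r + r = 0) _
  have hne : S.Nonempty := ⟨e 0, Finset.mem_image_of_mem e (Finset.mem_range.2 (by lia))⟩
  obtain ⟨D, hD, hcard⟩ := exists_transverseCircuit _ S hS (not_iasIndep_of_sum_eq_zero _ S hne hsum)
  exact ⟨D, hD, hcard.trans (Finset.card_image_le.trans (by simp))⟩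
end
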